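/- Let X be a KU-algebra and let d be a derivation of X. Then for all x, y ∈ X: (i) d(x) ≤ x; (ii) d(x*y) ≤ d(x)*y; (iii) d(x*y) ≤ x*d(y); (iv) d(x * d(x)) = 0. -/

import Mathlib

/-! The point is that `a ∧ b ≤ a` holds in every KU-algebra (KU1 with first argument `𝟎`), so the
two defining identities of a derivation bound `d (x ⋆ y)` by `d x ⋆ y` and by `x ⋆ d y`
respectively. The `(ℓ,r)`-identity for `𝟎 ⋆ 𝟎` gives `d 𝟎 = 𝟎`, and hence
`d x = d (𝟎 ⋆ x) ≤ d 𝟎 ⋆ x = x`. Finally `d (x ⋆ d x)` is, by the `(r,ℓ)`-identity, a meet of the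
form `a ∧ (d x ⋆ d x) = a ∧ 𝟎 = 𝟎`. -/

/-- A KU-algebra: a set `X` with a binary operation `⋆` and a constant `𝟎` satisfying
(KU1) `(x⋆y)⋆((y⋆z)⋆(x⋆z)) = 𝟎`, (KU2) `x⋆𝟎 = 𝟎`, (KU3) `𝟎⋆x = x`,
(KU4) `x⋆y = 𝟎` and `y⋆x = 𝟎` imply `x = y`. -/
class KUAlgebra (X : Type*) where
  star : X → X → X
  zero : X
  ku1 : ∀ x y z : X, star (star x y) (star (star y z) (star x z)) = zero
  ku2 : ∀ x : X, star x zero = zero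
  ku3 : ∀ x : X, star zero x = x
  ku4 : ∀ x y : X, star x y = zero → star y x = zero → x = y

infixl:70 " ⋆ " => KUAlgebra.star
notation "𝟎" => KUAlgebra.zero

/-- The order `x ≤ y ↔ y ⋆ x = 𝟎` on a KU-algebra. -/
def KUle {X : Type*} [KUAlgebra X] (x y : X) : Prop := y ⋆ x = 𝟎

/-- `x ∧ y := (x ⋆ y) ⋆ y` in a KU-algebra. -/
def KUwedge {X : Type*} [KUAlgebra X] (x y : X) : X := (x ⋆ y) ⋆ y

/-- An (ℓ,r)-derivation: `d(x⋆y) = (d(x)⋆y) ∧ (x⋆d(y))`. -/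
def IsLRDeriv {X : Type*} [KUAlgebra X] (d : X → X) : Prop :=
  ∀ x y : X, d (x ⋆ y) = KUwedge (d x ⋆ y) (x ⋆ d y)

/-- An (r,ℓ)-derivation: `d(x⋆y) = (x⋆d(y)) ∧ (d(x)⋆y)`. -/
def IsRLDeriv {X : Type*} [KUAlgebra X] (d : X → X) : Prop :=
  ∀ x y : X, d (x ⋆ y) = KUwedge (x ⋆ d y) (d x ⋆ y)

/-- A derivation is both an (ℓ,r)- and an (r,ℓ)-derivation. -/
def IsDeriv {X : Type*} [KUAlgebra X] (d : X → X) : Prop := IsLRDeriv d ∧ IsRLDeriv d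

/-- A fuzzy left derivations KU-ideal of `X` with respect to a self map `d`:
a fuzzy set `μ : X → [0,1]` with `μ 𝟎 ≥ μ x` and
`μ (d (x ⋆ z)) ≥ min (μ (d x ⋆ (y ⋆ z))) (μ (d y))`. -/
def IsFuzzyLeftDerivKUIdeal {X : Type*} [KUAlgebra X] (d : X → X) (μ : X → ℝ) : Prop :=
  (∀ x : X, μ x ∈ Set.Icc (0 : ℝ) 1) ∧
  (∀ x : X, μ 𝟎 ≥ μ x) ∧
  (∀ x y z : X, μ (d (x ⋆ z)) ≥ min (μ (d x ⋆ (y ⋆ z))) (μ (d y)))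

/-- A fuzzy right derivations KU-ideal of `X` with respect to a self map `d`:
a fuzzy set `μ : X → [0,1]` with `μ 𝟎 ≥ μ x` and
`μ (d (x ⋆ z)) ≥ min (μ (x ⋆ d (y ⋆ z))) (μ (d y))`. -/
def IsFuzzyRightDerivKUIdeal {X : Type*} [KUAlgebra X] (d : X → X) (μ : X → ℝ) : Prop :=
  (∀ x : X, μ x ∈ Set.Icc (0 : ℝ) 1) ∧
  (∀ x : X, μ 𝟎 ≥ μ x) ∧
  (∀ x y z : X, μ (d (x ⋆ z)) ≥ min (μ (x ⋆ d (y ⋆ z))) (μ (d y)))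

theorem KUAlgebra.star_self {X : Type*} [KUAlgebra X] (x : X) : x ⋆ x = 𝟎 := by
  simpa only [KUAlgebra.ku3] using KUAlgebra.ku1 (𝟎 : X) 𝟎 x

theorem KUwedge_le_left {X : Type*} [KUAlgebra X] (a b : X) : KUle (KUwedge a b) a := by
  simpa only [KUle, KUwedge, KUAlgebra.ku3] using KUAlgebra.ku1 (𝟎 : X) a b

theorem IsLRDeriv.map_zero {X : Type*} [KUAlgebra X] {d : X → X} (h : IsLRDeriv d) :
    d 𝟎 = 𝟎 := by
  simpa only [KUwedge, KUAlgebra.ku2, KUAlgebra.ku3, KUAlgebra.star_self] using h 𝟎 𝟎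

/-- For a derivation `d` of a KU-algebra: (i) `d x ≤ x`; (ii) `d(x⋆y) ≤ d(x)⋆y`;
(iii) `d(x⋆y) ≤ x⋆d(y)`; (iv) `d(x ⋆ d(x)) = 𝟎`. -/
theorem deriv_properties {X : Type*} [KUAlgebra X] (d : X → X) (hd : IsDeriv d) :
    ∀ x y : X,
      KUle (d x) x ∧
      KUle (d (x ⋆ y)) (d x ⋆ y) ∧
      KUle (d (x ⋆ y)) (x ⋆ d y) ∧
      d (x ⋆ d x) = 𝟎 := by
  obtain ⟨hl, hr⟩ := hd
  have h2 : ∀ x y : X, KUle (d (x ⋆ y)) (d x ⋆ y) := fun x y => by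
    rw [hl x y]
    exact KUwedge_le_left _ _
  have h3 : ∀ x y : X, KUle (d (x ⋆ y)) (x ⋆ d y) := fun x y => by
    rw [hr x y]
    exact KUwedge_le_left _ _
  intro x y
  refine ⟨?_, h2 x y, h3 x y, ?_⟩
  · simpa only [hl.map_zero, KUAlgebra.ku3] using h2 𝟎 x
  · rw [hr x (d x), KUwedge, KUAlgebra.star_self, KUAlgebra.ku2]
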